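/- Let N, a, b be natural numbers with 0 < a, 0 < b, and 2·a·b ∣ N. Let σ_{b} : ZMod N → ℂ satisfy 𝓕_N σ_{b} = b·1_{B_{b,N}}, let σ_{a} : ZMod (N/b) → ℂ satisfy 𝓕_{N/b} σ_{a} = a·1_{B_{a,N/b}}, and let σ_{ab} : ZMod N → ℂ satisfy 𝓕_N σ_{ab} = (a·b)·1_{B_{ab,N}}, where the B's are the centered bands. Then Shannon subsampling composes: for every X : ZMod N → ℂ, ↓_a(σ_{a} ⋆ ↓_b(σ_{b} ⋆ X)) = ↓_{a·b}(σ_{ab} ⋆ X) as functions ZMod (N/(a·b)) → ℂ. -/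

import Mathlib

/-!
Subsampling commutes with filtering at the price of upsampling the filter, so two successive
filter-and-decimate stages amount to one decimation by `a * b` with kernel `↑_b σ_a ⋆ σ_b`.
The spectrum of `↑_b σ_a` is the spectrum of `σ_a` continued `N / b`-periodically, i.e. `b` copies
of `B_{a,N/b}`; the filter `σ_b` keeps only the one around frequency `0`, which is `B_{ab,N}`.
Hence the combined kernel has the same Fourier transform as `σ_{ab}`.
-/

open ZMod Finset

noncomputable section

/-- Circular convolution on `ZMod N`: `(f ⋆ g)(n) = ∑ m, f m * g (n - m)`. -/
def cconv {N : ℕ} [NeZero N] (f g : ZMod N → ℂ) : ZMod N → ℂ :=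
  fun n => ∑ m : ZMod N, f m * g (n - m)

/-- Decimation operator `↓_s : (ZMod N → ℂ) → (ZMod M → ℂ)`, `(↓_s f)(k) = f (s * k.val)`. -/
def decim (N M s : ℕ) (f : ZMod N → ℂ) : ZMod M → ℂ :=
  fun k => f ((s * k.val : ℕ) : ZMod N)

/-- The centered band `B_{s,N} = {j : ZMod N | j.val < N/(2s) ∨ N − N/(2s) ≤ j.val}`. -/
def band (s N : ℕ) : Set (ZMod N) :=
  {j : ZMod N | j.val < N / (2 * s) ∨ N - N / (2 * s) ≤ j.val}

section Convolution

variable {N : ℕ} [NeZero N]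

lemma dft_cconv (f g : ZMod N → ℂ) (k : ZMod N) : 𝓕 (cconv f g) k = 𝓕 f k * 𝓕 g k := by
  have translate (m : ZMod N) : ∑ n, stdAddChar (-(n * k)) * g (n - m) =
      stdAddChar (-(m * k)) * 𝓕 g k := by
    rw [dft_apply, mul_sum]
    refine Fintype.sum_equiv (Equiv.subRight m) _ _ fun n => ?_
    rw [Equiv.subRight_apply, smul_eq_mul, ← mul_assoc, ← AddChar.map_add_eq_mul]
    ring_nf
  calc 𝓕 (cconv f g) k
      = ∑ m, f m * ∑ n, stdAddChar (-(n * k)) * g (n - m) := by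
        simp only [dft_apply, cconv, smul_eq_mul, mul_sum]
        rw [sum_comm]
        exact sum_congr rfl fun _ _ => sum_congr rfl fun _ _ => mul_left_comm ..
    _ = 𝓕 f k * 𝓕 g k := by
        simp only [translate, dft_apply f, smul_eq_mul, sum_mul]
        exact sum_congr rfl fun _ _ => by ring

lemma cconv_assoc (f g h : ZMod N → ℂ) : cconv (cconv f g) h = cconv f (cconv g h) := by
  apply (dft (N := N) (E := ℂ)).injective
  ext k
  simp only [dft_cconv, mul_assoc]

end Convolution

section Dilation

variable {N M s : ℕ}

lemma intCast_mul_eq_of_intCast_eq (h : N ∣ s * M) {x y : ℤ} (hxy : (x : ZMod M) = y) :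
    ((s * x : ℤ) : ZMod N) = (s * y : ℤ) := by
  rw [ZMod.intCast_eq_intCast_iff_dvd_sub] at hxy ⊢
  rw [← mul_sub]
  exact (Int.natCast_dvd_natCast.2 h).trans (by simpa using mul_dvd_mul_left (s : ℤ) hxy)

lemma natCast_mul_val_sub [NeZero M] (h : N ∣ s * M) (x y : ZMod M) :
    ((s * (x - y).val : ℕ) : ZMod N) = (s * x.val : ℕ) - (s * y.val : ℕ) := by
  have := intCast_mul_eq_of_intCast_eq (x := (x - y).val) (y := x.val - y.val) h (by simp)
  simpa [mul_sub] using this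

lemma stdAddChar_intCast_mul [NeZero N] [NeZero M] (h : N = s * M) (n : ℤ) :
    stdAddChar ((s * n : ℤ) : ZMod N) = stdAddChar (n : ZMod M) := by
  have hs : (s : ℂ) ≠ 0 := by
    intro hs
    exact NeZero.ne N (by simp [h, Nat.cast_eq_zero.1 hs])
  rw [stdAddChar_coe, stdAddChar_coe, h]
  push_cast
  rw [mul_left_comm, mul_div_mul_left _ _ hs]

lemma decim_decim {K r : ℕ} (h : N ∣ s * M) (f : ZMod N → ℂ) :
    decim M K r (decim N M s f) = decim N K (r * s) f := by
  ext k
  have := intCast_mul_eq_of_intCast_eq (x := ((r * k.val : ℕ) : ZMod M).val)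
    (y := (r * k.val : ℕ)) h (by simp only [ZMod.val_natCast, Int.cast_natCast, ZMod.natCast_mod])
  simp only [decim]
  congr 1
  rw [mul_comm r s, mul_assoc]
  exact_mod_cast this

end Dilation

section Upsampling

variable (N M s : ℕ) [NeZero M]

/-- Upsampling `↑_s : (ZMod M → ℂ) → (ZMod N → ℂ)`, the adjoint of `decim N M s`. It is written as
the pushforward of `f` along `m ↦ s * m`; when `N = s * M` this map is injective, and `↑_s f` is
`f` with `s - 1` zeros inserted after each value. -/
def upsample (f : ZMod M → ℂ) : ZMod N → ℂ :=
  fun n => ∑ m : ZMod M with ((s * m.val : ℕ) : ZMod N) = n, f m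

variable {N M s} [NeZero N]

lemma sum_upsample_mul (f : ZMod M → ℂ) (g : ZMod N → ℂ) :
    ∑ n, upsample N M s f n * g n = ∑ m, f m * decim N M s g m := by
  simp only [upsample, decim, sum_filter, sum_mul, ite_mul, zero_mul]
  rw [sum_comm]
  simp only [sum_ite_eq, mem_univ, if_true]

lemma cconv_decim (h : N ∣ s * M) (f : ZMod M → ℂ) (g : ZMod N → ℂ) :
    cconv f (decim N M s g) = decim N M s (cconv (upsample N M s f) g) := by
  ext k
  simp only [decim, cconv, sum_upsample_mul, natCast_mul_val_sub h]

lemma dft_upsample (h : N = s * M) (f : ZMod M → ℂ) (k : ZMod N) :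
    𝓕 (upsample N M s f) k = 𝓕 f k.cast := by
  have character (m : ZMod M) : stdAddChar (-(((s * m.val : ℕ) : ZMod N) * k)) =
      stdAddChar (-(m * k.cast)) := by
    have := stdAddChar_intCast_mul h (-(m.val * k.val))
    simpa [mul_assoc] using this
  simp only [dft_apply, smul_eq_mul, mul_comm (stdAddChar _), sum_upsample_mul, decim, character]

lemma decim_cconv_decim_cconv {K r : ℕ} (h : N = s * M) {f : ZMod M → ℂ} {g φ : ZMod N → ℂ}
    (hφ : ∀ k, 𝓕 φ k = 𝓕 f k.cast * 𝓕 g k) (X : ZMod N → ℂ) :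
    decim M K r (cconv f (decim N M s (cconv g X))) = decim N K (r * s) (cconv φ X) := by
  have kernel : cconv (upsample N M s f) g = φ := by
    apply (dft (N := N) (E := ℂ)).injective
    ext k
    rw [dft_cconv, dft_upsample h, hφ]
  rw [cconv_decim h.dvd, decim_decim h.dvd, ← cconv_assoc, kernel]

end Upsampling

section Band

variable {N M b : ℕ} [NeZero N]

lemma band_mul (h : N = b * M) (a : ℕ) :
    band (a * b) N = band b N ∩ ZMod.cast ⁻¹' band a M := by
  have hb : 0 < b := Nat.pos_of_ne_zero fun hb => NeZero.ne N (by simp [h, hb])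
  have half_b : N / (2 * b) = M / 2 := by rw [h, mul_comm 2, Nat.mul_div_mul_left _ _ hb]
  have half_ab : N / (2 * (a * b)) = M / (2 * a) := by
    rw [h, ← mul_assoc, mul_comm _ b, Nat.mul_div_mul_left _ _ hb]
  have half_le : M / (2 * a) ≤ M / 2 := by
    rw [← Nat.div_div_eq_div_mul]; exact Nat.div_le_self _ _
  ext j
  have hj := j.val_lt
  obtain ⟨c, rfl⟩ : ∃ c, b = c + 1 := ⟨b - 1, by lia⟩
  have hN : N = M * c + M := by rw [h]; ring
  have low (hv : j.val < M / 2) : j.val % M = j.val := Nat.mod_eq_of_lt (by lia)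
  have high (hv : N - M / 2 ≤ j.val) : j.val % M = j.val - M * c := by
    rw [← Nat.sub_mul_mod (k := c) (by lia), Nat.mod_eq_of_lt (by lia)]
  simp only [band, Set.mem_inter_iff, Set.mem_preimage, Set.mem_ofPred_eq, half_b, half_ab,
    ← ZMod.natCast_val j (R := ZMod M), ZMod.val_natCast]
  generalize M * c = u at *
  grind

lemma indicator_band_mul (h : N = b * M) (a : ℕ) (j : ZMod N) :
    (band (a * b) N).indicator (1 : ZMod N → ℂ) j =
      (band b N).indicator 1 j * (band a M).indicator (1 : ZMod M → ℂ) j.cast := by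
  rw [band_mul h, Set.inter_indicator_one, Pi.mul_apply]
  rfl

end Band

theorem shannon_subsample_comp_general (N a b : ℕ) [NeZero N] [NeZero (N / b)]
    (hdvd : a * b ∣ N)
    (σb : ZMod N → ℂ)
    (hσb : ∀ m : ZMod N,
      𝓕 σb m = (b : ℂ) * Set.indicator (band b N) (1 : ZMod N → ℂ) m)
    (σa : ZMod (N / b) → ℂ)
    (hσa : ∀ m : ZMod (N / b),
      𝓕 σa m = (a : ℂ) * Set.indicator (band a (N / b)) (1 : ZMod (N / b) → ℂ) m)
    (σab : ZMod N → ℂ)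
    (hσab : ∀ m : ZMod N,
      𝓕 σab m = ((a : ℂ) * (b : ℂ)) * Set.indicator (band (a * b) N) (1 : ZMod N → ℂ) m) :
    ∀ X : ZMod N → ℂ,
      decim (N / b) (N / (a * b)) a (cconv σa (decim N (N / b) b (cconv σb X)))
        = decim N (N / (a * b)) (a * b) (cconv σab X) := by
  have hN : N = b * (N / b) := (Nat.mul_div_cancel' (dvd_of_mul_left_dvd hdvd)).symm
  refine decim_cconv_decim_cconv hN fun k => ?_
  rw [hσab, hσa, hσb, indicator_band_mul hN]
  ring

/-- Shannon subsampling composes: subsampling by `b` then by `a` equals subsampling by `a·b`. -/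
theorem shannon_subsample_comp (N a b : ℕ) [NeZero N] [NeZero (N / b)]
    (ha : 0 < a) (hb : 0 < b) (hdvd : 2 * a * b ∣ N)
    (σb : ZMod N → ℂ)
    (hσb : ∀ m : ZMod N,
      𝓕 σb m = (b : ℂ) * Set.indicator (band b N) (1 : ZMod N → ℂ) m)
    (σa : ZMod (N / b) → ℂ)
    (hσa : ∀ m : ZMod (N / b),
      𝓕 σa m = (a : ℂ) * Set.indicator (band a (N / b)) (1 : ZMod (N / b) → ℂ) m)
    (σab : ZMod N → ℂ)
    (hσab : ∀ m : ZMod N,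
      𝓕 σab m = ((a : ℂ) * (b : ℂ)) * Set.indicator (band (a * b) N) (1 : ZMod N → ℂ) m) :
    ∀ X : ZMod N → ℂ,
      decim (N / b) (N / (a * b)) a (cconv σa (decim N (N / b) b (cconv σb X)))
        = decim N (N / (a * b)) (a * b) (cconv σab X) := by
  have hab : a * b ∣ N := (Dvd.intro_left 2 (mul_assoc 2 a b).symm).trans hdvd
  exact shannon_subsample_comp_general N a b hab σb hσb σa hσa σab hσab

end
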